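/- In the network model, suppose G_i = I_n for all i (so m = n), and suppose (x̄, η̄) and (x̃, η̃) are two equilibria with x̄, x̃ ∈ (Ω_n)^N. Then x̄ = x̃; moreover the common output value is ∇H_{n,i}(x̄_i) = y* for all i, with y* = −(Σ_{i=1}^N (J_i − R_i))^{-1} Σ_{i=1}^N d_i. -/

import Mathlib

open Matrix Set

/-- The gradient of `H : ℝ^p → ℝ` in coordinates: `(∇H(x))_j = DH(x)[e_j]`. -/
noncomputable def grad {p : ℕ} (H : (Fin p → ℝ) → ℝ) (x : Fin p → ℝ) : Fin p → ℝ :=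
  fun j => fderiv ℝ H x (Pi.single j 1)

/-!
Summing the node equations of an equilibrium over all nodes cancels the edge terms, because the
columns of `B` sum to zero. Since `ker Bᵀ = span {1}`, all node outputs `∇H_{n,i}(x̄_i)` agree, so
the summed equation is linear in a single vector, with coefficient matrix `∑ (J_i - R_i)`. The
quadratic form of this matrix vanishes only at zero, so the output is the same at every equilibrium,
and the injectivity of the gradient of a strictly convex function recovers the states.
-/

section StrictConvexity

theorem strictConvexOn_comp_affineMap {𝕜 E F β : Type*} [Ring 𝕜] [PartialOrder 𝕜]
    [AddCommGroup E] [AddCommGroup F] [AddCommMonoid β] [PartialOrder β] [Module 𝕜 E]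
    [Module 𝕜 F] [SMul 𝕜 β] {f : F → β} {s : Set F} (hf : StrictConvexOn 𝕜 s f)
    {g : E →ᵃ[𝕜] F} (hg : Function.Injective g) : StrictConvexOn 𝕜 (g ⁻¹' s) (f ∘ g) :=
  ⟨hf.1.affine_preimage g, fun x hx y hy hxy a b ha hb hab => by
    simpa only [Function.comp_apply, Convex.combo_affine_apply hab]
      using hf.2 hx hy (hg.ne hxy) ha hb hab⟩

variable {E : Type*} [NormedAddCommGroup E] [NormedSpace ℝ E] {f : E → ℝ} {s : Set E}

theorem apply_sub_lt_sub_of_strictConvexOn {f' : E →L[ℝ] ℝ} {x y : E}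
    (hf : StrictConvexOn ℝ s f) (hx : x ∈ s) (hy : y ∈ s) (hxy : x ≠ y)
    (hf' : HasFDerivAt f f' x) : f' (y - x) < f y - f x := by
  have hline :
      StrictConvexOn ℝ (AffineMap.lineMap x y ⁻¹' s) (f ∘ AffineMap.lineMap (k := ℝ) x y) :=
    strictConvexOn_comp_affineMap hf (AffineMap.lineMap_injective ℝ hxy)
  have hderiv : HasDerivAt (f ∘ AffineMap.lineMap (k := ℝ) x y) (f' (y - x)) 0 :=
    HasFDerivAt.comp_hasDerivAt 0 (by simpa using hf') AffineMap.hasDerivAt_lineMap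
  simpa [slope_def_field] using
    hline.lt_slope_of_hasDerivAt (by simpa using hx) (by simpa using hy) zero_lt_one hderiv

theorem injOn_fderiv_of_strictConvexOn (hf : StrictConvexOn ℝ s f)
    (hd : ∀ x ∈ s, DifferentiableAt ℝ f x) : InjOn (fderiv ℝ f) s := by
  intro x hx y hy hxy
  by_contra hne
  have hlt₁ := apply_sub_lt_sub_of_strictConvexOn hf hx hy hne (hd x hx).hasFDerivAt
  have hlt₂ := apply_sub_lt_sub_of_strictConvexOn hf hy hx (Ne.symm hne) (hd y hy).hasFDerivAt
  rw [← hxy, ← neg_sub y x, map_neg] at hlt₂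
  linarith

theorem fderiv_apply_eq_grad_dotProduct {p : ℕ} (H : (Fin p → ℝ) → ℝ) (x v : Fin p → ℝ) :
    fderiv ℝ H x v = grad H x ⬝ᵥ v := by
  conv_lhs => rw [pi_eq_sum_univ' v, map_sum]
  simp only [map_smul, smul_eq_mul, dotProduct, grad, mul_comm]

theorem injOn_grad_of_strictConvexOn {p : ℕ} {H : (Fin p → ℝ) → ℝ} {Ω : Set (Fin p → ℝ)}
    (hH : StrictConvexOn ℝ Ω H) (hd : ∀ x ∈ Ω, DifferentiableAt ℝ H x) : InjOn (grad H) Ω :=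
  fun x hx y hy hxy => injOn_fderiv_of_strictConvexOn hH hd hx hy <|
    ContinuousLinearMap.ext fun v => by simp only [fderiv_apply_eq_grad_dotProduct, hxy]

end StrictConvexity

theorem isUnit_sub_of_posDef {K n : Type*} [Field K] [PartialOrder K] [StarRing K]
    [StarOrderedRing K] [Fintype n] [DecidableEq n] {J R : Matrix n n K} (hJ : Jᴴ = -J)
    (hR : R.PosDef) : IsUnit (J - R) := by
  rw [← mulVec_injective_iff_isUnit, ← coe_mulVecLin, ← LinearMap.ker_eq_bot,
    LinearMap.ker_eq_bot']
  intro v hv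
  by_contra hne
  have hJR : J *ᵥ v = R *ᵥ v := by
    rwa [mulVecLin_apply, sub_mulVec, sub_eq_zero] at hv
  have hpos : 0 < star v ⬝ᵥ (J *ᵥ v) := hJR ▸ hR.dotProduct_mulVec_pos hne
  have hskew : star (star v ⬝ᵥ (J *ᵥ v)) = -(star v ⬝ᵥ (J *ᵥ v)) := by
    rw [← star_dotProduct, star_mulVec, hJ, vecMul_neg, neg_dotProduct, ← dotProduct_mulVec]
  rw [hpos.le.isSelfAdjoint.star_eq] at hskew
  exact lt_asymm hpos (neg_pos.mp (hskew ▸ hpos))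

section Network

variable {K V E ι : Type*}

theorem sum_sum_smul_eq_zero [Semiring K] {M : Type*} [AddCommMonoid M] [Module K M]
    [Fintype V] [Fintype E] {B : Matrix V E K} (hB : ∀ k, ∑ i, B i k = 0) (u : E → M) :
    ∑ i, ∑ k, B i k • u k = 0 := by
  rw [Finset.sum_comm]
  simp only [← Finset.sum_smul, hB, zero_smul, Finset.sum_const_zero]

variable [CommRing K] [Fintype V] {B : Matrix V E K}

theorem one_mem_ker_mulVecLin_transpose_iff :
    1 ∈ LinearMap.ker Bᵀ.mulVecLin ↔ ∀ k, ∑ i, B i k = 0 := by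
  simp [funext_iff, vecMul, dotProduct]

theorem eq_of_sum_smul_eq_zero (hB : LinearMap.ker Bᵀ.mulVecLin ≤ Submodule.span K {1})
    {y : V → ι → K} (hy : ∀ k, ∑ i, B i k • y i = 0) (i j : V) : y i = y j := by
  ext l
  have hker : (fun i => y i l) ∈ LinearMap.ker Bᵀ.mulVecLin :=
    LinearMap.mem_ker.mpr <| funext fun k => by
      simpa [vecMul, dotProduct, mul_comm] using congrFun (hy k) l
  obtain ⟨c, hc⟩ := Submodule.mem_span_singleton.mp (hB hker)
  exact (congrFun hc i).symm.trans (congrFun hc j)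

variable [Fintype E] [Fintype ι]

/-- The equilibrium equations of a network with incidence matrix `B`, node matrices
`A i = J_i - R_i`, identity input matrices and constant inputs `d`. They involve the states only
through the node outputs `y i = ∇H_{n,i}(x_i)` and the edge outputs `u k = ∇H_{e,k}(η_k)`, so these
are taken as the variables. -/
structure IsNetworkEquilibrium (B : Matrix V E K) (A : V → Matrix ι ι K) (d y : V → ι → K)
    (u : E → ι → K) : Prop where
  edge : ∀ k, ∑ i, B i k • y i = 0
  node : ∀ i, 0 = A i *ᵥ y i - ∑ k, B i k • u k + d i

namespace IsNetworkEquilibrium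

variable {A : V → Matrix ι ι K} {d y : V → ι → K} {u : E → ι → K}

theorem sum_mulVec_eq_neg_sum (h : IsNetworkEquilibrium B A d y u)
    (hB : ∀ k, ∑ i, B i k = 0) : ∑ i, A i *ᵥ y i = -∑ i, d i := by
  have hsum : ∑ i, (A i *ᵥ y i - ∑ k, B i k • u k + d i) = 0 :=
    Finset.sum_eq_zero fun i _ => (h.node i).symm
  rw [Finset.sum_add_distrib, Finset.sum_sub_distrib, sum_sum_smul_eq_zero hB, sub_zero] at hsum
  exact eq_neg_of_add_eq_zero_left hsum

theorem output_eq [DecidableEq ι] (h : IsNetworkEquilibrium B A d y u)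
    (hB : LinearMap.ker Bᵀ.mulVecLin = Submodule.span K {1}) (hA : IsUnit (∑ i, A i)) (i : V) :
    y i = -((∑ i, A i)⁻¹ *ᵥ ∑ i, d i) := by
  have hcol : ∀ k, ∑ i, B i k = 0 :=
    one_mem_ker_mulVecLin_transpose_iff.mp (hB ▸ Submodule.mem_span_singleton_self 1)
  have hsum : (∑ j, A j) *ᵥ y i = -∑ j, d j := by
    rw [sum_mulVec, ← h.sum_mulVec_eq_neg_sum hcol]
    exact Finset.sum_congr rfl fun j _ => by rw [eq_of_sum_smul_eq_zero hB.le h.edge i j]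
  rw [← mulVec_neg, ← hsum, mulVec_mulVec,
    nonsing_inv_mul _ ((isUnit_iff_isUnit_det _).mp hA), one_mulVec]

end IsNetworkEquilibrium

theorem equilibrium_x_unique_general {n : ℕ} {B : Matrix V E ℝ}
    (hB : LinearMap.ker Bᵀ.mulVecLin = Submodule.span ℝ {1})
    {J R : V → Matrix (Fin n) (Fin n) ℝ} (hJ : (∑ i, J i)ᵀ = -∑ i, J i)
    (hR : (∑ i, R i).PosDef) {d : V → Fin n → ℝ} {Ω : V → Set (Fin n → ℝ)}
    {H : V → (Fin n → ℝ) → ℝ} (hH : ∀ i, StrictConvexOn ℝ (Ω i) (H i))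
    (hd : ∀ i, ∀ z ∈ Ω i, DifferentiableAt ℝ (H i) z) {x x' : V → Fin n → ℝ}
    {u u' : E → Fin n → ℝ} (hx : ∀ i, x i ∈ Ω i) (hx' : ∀ i, x' i ∈ Ω i)
    (h : IsNetworkEquilibrium B (fun i => J i - R i) d (fun i => grad (H i) (x i)) u)
    (h' : IsNetworkEquilibrium B (fun i => J i - R i) d (fun i => grad (H i) (x' i)) u') :
    x = x' ∧ IsUnit (∑ i, (J i - R i)) ∧
      ∀ i, grad (H i) (x i) = -((∑ i, (J i - R i))⁻¹ *ᵥ ∑ i, d i) := by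
  have hunit : IsUnit (∑ i, (J i - R i)) := by
    rw [Finset.sum_sub_distrib]
    exact isUnit_sub_of_posDef (by rwa [conjTranspose_eq_transpose_of_trivial]) hR
  have hy := h.output_eq hB hunit
  have hy' := h'.output_eq hB hunit
  refine ⟨funext fun i => ?_, hunit, hy⟩
  exact injOn_grad_of_strictConvexOn (hH i) (hd i) (hx i) (hx' i) ((hy i).trans (hy' i).symm)

end Network

/-- with `G_i = I_n`, the `x`-component of an equilibrium of the
network is unique, and the common output value is
`∇H_{n,i}(x̄_i) = y* = −(Σ(J_i − R_i))⁻¹ Σ d_i` for every `i`. -/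
theorem equilibrium_x_unique
    {n N M : ℕ} (hn : 0 < n) (hN : 0 < N) (hM : 0 < M)
    (B : Matrix (Fin N) (Fin M) ℝ)
    (hB1 : ∀ k, ∑ i, B i k = 0)
    (hBker : LinearMap.ker (Matrix.mulVecLin Bᵀ) =
      Submodule.span ℝ {(fun _ => (1 : ℝ) : Fin N → ℝ)})
    (J R : Fin N → Matrix (Fin n) (Fin n) ℝ)
    (hJ : ∀ i, (J i)ᵀ = -(J i)) (hR : ∀ i, (R i).PosDef)
    (d : Fin N → Fin n → ℝ)
    (Ωn : Set (Fin n → ℝ)) (hΩno : IsOpen Ωn) (hΩnc : Convex ℝ Ωn)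
    (Ωe : Set (Fin n → ℝ)) (hΩeo : IsOpen Ωe) (hΩec : Convex ℝ Ωe)
    (Hn : Fin N → (Fin n → ℝ) → ℝ)
    (hHnC : ∀ i, ContDiffOn ℝ 1 (Hn i) Ωn)
    (hHnconv : ∀ i, StrictConvexOn ℝ Ωn (Hn i))
    (He : Fin M → (Fin n → ℝ) → ℝ)
    (hHeC : ∀ k, ContDiffOn ℝ 1 (He k) Ωe)
    (hHeconv : ∀ k, StrictConvexOn ℝ Ωe (He k))
    -- the equilibrium (x̄, η̄):
    (xbar : Fin N → Fin n → ℝ) (ηbar : Fin M → Fin n → ℝ)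
    (hxbar : ∀ i, xbar i ∈ Ωn) (hηbar : ∀ k, ηbar k ∈ Ωe)
    (heq1 : ∀ k, ∑ i, B i k • grad (Hn i) (xbar i) = 0)
    (heq2 : ∀ i, (0 : Fin n → ℝ) = (J i - R i) *ᵥ grad (Hn i) (xbar i)
      - (∑ k, B i k • grad (He k) (ηbar k)) + d i)
    -- the equilibrium (x̃, η̃):
    (xtil : Fin N → Fin n → ℝ) (ηtil : Fin M → Fin n → ℝ)
    (hxtil : ∀ i, xtil i ∈ Ωn) (hηtil : ∀ k, ηtil k ∈ Ωe)
    (heq1' : ∀ k, ∑ i, B i k • grad (Hn i) (xtil i) = 0)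
    (heq2' : ∀ i, (0 : Fin n → ℝ) = (J i - R i) *ᵥ grad (Hn i) (xtil i)
      - (∑ k, B i k • grad (He k) (ηtil k)) + d i) :
    xbar = xtil ∧
    IsUnit (∑ i, (J i - R i)) ∧
    ∀ i, grad (Hn i) (xbar i) = -((∑ i, (J i - R i))⁻¹ *ᵥ (∑ i, d i)) := by
  have : Nonempty (Fin N) := ⟨⟨0, hN⟩⟩
  exact equilibrium_x_unique_general hBker
    (by simp only [transpose_sum, hJ, Finset.sum_neg_distrib])
    (posDef_sum Finset.univ_nonempty fun i _ => hR i) hHnconv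
    (fun i z hz => ((hHnC i).contDiffAt (hΩno.mem_nhds hz)).differentiableAt one_ne_zero)
    hxbar hxtil ⟨heq1, heq2⟩ ⟨heq1', heq2'⟩
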